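/- Let $\ell:(0,\infty)\to(0,\infty)$ be a (Lebesgue) measurable, locally bounded function that is slowly varying at infinity, that is, $\ell(ct)/\ell(t)\to 1$ as $t\to\infty$ for every $c>0$. Let $q$ be a positive function, defined in a neighborhood of infinity, with $q(t)\to\infty$ and $q(t)/t\to 0$ as $t\to\infty$, and fix constants $a, A$ with $0<a<1<A$. Then $$\int_{a q(t)}^{A q(t)} y^{q(t)-1} e^{-y}\,\ell(t/y)\,dy \;\sim\; \ell(t/q(t)) \int_{a q(t)}^{A q(t)} y^{q(t)-1} e^{-y}\,dy,\qquad t\to\infty,$$ where $f(t)\sim g(t)$ as $t\to\infty$ means $f(t)/g(t)\to 1$. -/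

import Mathlib

open MeasureTheory Set Filter Topology

/-- `ℓ : (0,∞) → (0,∞)` is slowly varying at infinity: it is positive and Lebesgue measurable on
`(0,∞)`, and `ℓ (c t) / ℓ t → 1` as `t → ∞` for every `c > 0`. Only the values of `ℓ` on `(0,∞)`
matter. -/
structure SlowlyVaryingAtTop (ℓ : ℝ → ℝ) : Prop where
  pos : ∀ x : ℝ, 0 < x → 0 < ℓ x
  aemeasurable : AEMeasurable ℓ (volume.restrict (Ioi 0))
  tendsto : ∀ c : ℝ, 0 < c → Tendsto (fun t => ℓ (c * t) / ℓ t) atTop (𝓝 1)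

/-- `ℓ` is locally bounded on `(0,∞)`: bounded on every compact subinterval of `(0,∞)`. -/
def LocallyBoundedOnIoi (ℓ : ℝ → ℝ) : Prop :=
  ∀ u v : ℝ, 0 < u → ∃ M : ℝ, ∀ x ∈ Icc u v, |ℓ x| ≤ M

/-- The class `𝒬` of positive functions `q`, defined in a neighbourhood of infinity, with
`q t → ∞` and `q t / t → 0` as `t → ∞`. Only the values of `q` near infinity matter. -/
structure ClassQ (q : ℝ → ℝ) : Prop where
  eventually_pos : ∀ᶠ t in atTop, 0 < q t
  tendsto_atTop : Tendsto q atTop atTop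
  tendsto_div : Tendsto (fun t => q t / t) atTop (𝓝 0)

/-- A function which is a.e.-measurable on `(0,∞)` stays so after composition with a measurable map
into `(0,∞)` that has a differentiable left inverse. -/
theorem AEMeasurable.comp_of_differentiableOn_leftInverse {ℓ f g : ℝ → ℝ} {S : Set ℝ}
    (hℓ : AEMeasurable ℓ (volume.restrict (Ioi 0))) (hf : Measurable f)
    (hpos : ∀ x ∈ S, 0 < f x) (hg : DifferentiableOn ℝ g (Ioi 0))
    (hinv : ∀ x ∈ S, g (f x) = x) :
    AEMeasurable (fun x => ℓ (f x)) (volume.restrict S) := by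
  have hqmp : Measure.QuasiMeasurePreserving f (volume.restrict S) (volume.restrict (Ioi 0)) := by
    refine ⟨hf, Measure.AbsolutelyContinuous.mk fun s hs h0 => ?_⟩
    rw [Measure.map_apply hf hs, Measure.restrict_apply (hf hs)]
    rw [Measure.restrict_apply hs] at h0
    refine measure_mono_null (t := g '' (s ∩ Ioi 0)) ?_
      (addHaar_image_eq_zero_of_differentiableOn_of_addHaar_eq_zero volume
        (hg.mono inter_subset_right) h0)
    rintro x ⟨hx, hxS⟩
    exact ⟨f x, ⟨hx, hpos x hxS⟩, hinv x hxS⟩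
  exact hℓ.comp_quasiMeasurePreserving hqmp

/-- The truncated increment `min 1 |h (x + v) - h x|`. -/
noncomputable def truncIncrement (h : ℝ → ℝ) (x v : ℝ) : ℝ := min 1 |h (x + v) - h x|

theorem truncIncrement_nonneg (h : ℝ → ℝ) (x v : ℝ) : 0 ≤ truncIncrement h x v :=
  le_min zero_le_one (abs_nonneg _)

theorem norm_truncIncrement_le_one (h : ℝ → ℝ) (x v : ℝ) : ‖truncIncrement h x v‖ ≤ 1 := by
  rw [Real.norm_of_nonneg (truncIncrement_nonneg h x v)]
  exact min_le_left _ _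

theorem truncIncrement_triangle (h : ℝ → ℝ) (x u w : ℝ) :
    truncIncrement h x u ≤ truncIncrement h (x + u) w + truncIncrement h x (u + w) := by
  unfold truncIncrement
  rw [← add_assoc]
  have htri : |h (x + u) - h x| ≤ |h (x + u + w) - h (x + u)| + |h (x + u + w) - h x| := by
    rw [abs_sub_comm (h (x + u + w)) (h (x + u))]
    exact abs_sub_le _ _ _
  have h1 := abs_nonneg (h (x + u + w) - h (x + u))
  have h2 := abs_nonneg (h (x + u + w) - h x)
  rcases min_cases 1 |h (x + u + w) - h (x + u)| with h3 | h3 <;>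
  rcases min_cases 1 |h (x + u + w) - h x| with h4 | h4 <;>
  rcases min_cases 1 |h (x + u) - h x| with h5 | h5 <;> linarith

theorem aestronglyMeasurable_truncIncrement {h : ℝ → ℝ} (hm : AEMeasurable h) (x : ℝ) :
    AEStronglyMeasurable (truncIncrement h x) := by
  have hshift : AEMeasurable (fun v => h (x + v)) :=
    hm.comp_quasiMeasurePreserving (measurePreserving_add_left volume x).quasiMeasurePreserving
  have habs : AEMeasurable (fun v => |h (x + v) - h x|) := (hshift.sub_const _).norm
  exact (aemeasurable_const.min habs).aestronglyMeasurable

theorem intervalIntegrable_truncIncrement {h : ℝ → ℝ} (hm : AEMeasurable h) (x a b : ℝ) :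
    IntervalIntegrable (truncIncrement h x) volume a b :=
  (intervalIntegrable_const (c := (1 : ℝ))).mono_fun
    (aestronglyMeasurable_truncIncrement hm x).restrict
    (ae_of_all _ fun v => by simpa using norm_truncIncrement_le_one h x v)

theorem tendsto_integral_truncIncrement {h : ℝ → ℝ} (hm : AEMeasurable h)
    (hlim : ∀ v, Tendsto (fun x => h (x + v) - h x) atTop (𝓝 0)) (a b : ℝ) :
    Tendsto (fun x => ∫ v in a..b, truncIncrement h x v) atTop (𝓝 0) := by
  have key := intervalIntegral.tendsto_integral_filter_of_dominated_convergence
    (μ := volume) (a := a) (b := b) (F := fun x v => truncIncrement h x v) (f := fun _ => (0 : ℝ))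
    (l := atTop) (fun _ => (1 : ℝ))
    (.of_forall fun x => (aestronglyMeasurable_truncIncrement hm x).restrict)
    (.of_forall fun x => ae_of_all _ fun v _ => norm_truncIncrement_le_one h x v)
    intervalIntegrable_const
    (ae_of_all _ fun v _ => by
      simpa [truncIncrement] using (tendsto_const_nhds (x := (1 : ℝ))).min (hlim v).abs)
  simpa using key

/-- Uniform convergence theorem in additive form: if the increments `h (x + u) - h x` of a measurable
function tend to `0` for each `u`, they do so uniformly for `u` in compact intervals. -/
theorem eventually_abs_increment_lt {h : ℝ → ℝ} (hm : AEMeasurable h)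
    (hlim : ∀ v, Tendsto (fun x => h (x + v) - h x) atTop (𝓝 0)) (α β : ℝ) {δ : ℝ} (hδ : 0 < δ) :
    ∀ᶠ x in atTop, ∀ u ∈ Icc α β, |h (x + u) - h x| < δ := by
  have hδ' : 0 < min 1 δ / 2 := by positivity
  obtain ⟨X, hX⟩ := eventually_atTop.1
    ((tendsto_integral_truncIncrement hm hlim 0 1).eventually_lt_const hδ')
  filter_upwards [(tendsto_integral_truncIncrement hm hlim α (β + 1)).eventually_lt_const hδ',
    eventually_ge_atTop (X - α)] with x hx hxX u hu
  have hshift : IntervalIntegrable (fun w => truncIncrement h x (u + w)) volume 0 1 := by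
    simpa using (intervalIntegrable_truncIncrement hm x (u + 0) (u + 1)).comp_add_left (c := u)
  have hle : truncIncrement h x u ≤
      (∫ w in (0 : ℝ)..1, truncIncrement h (x + u) w) +
        ∫ w in (0 : ℝ)..1, truncIncrement h x (u + w) := by
    rw [← intervalIntegral.integral_add (intervalIntegrable_truncIncrement hm _ _ _) hshift]
    have := intervalIntegral.integral_mono_on zero_le_one
      (intervalIntegrable_const (c := truncIncrement h x u))
      ((intervalIntegrable_truncIncrement hm (x + u) 0 1).add hshift)
      fun w _ => truncIncrement_triangle h x u w
    simpa using this
  have hsub : ∫ w in (0 : ℝ)..1, truncIncrement h x (u + w) ≤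
      ∫ v in α..(β + 1), truncIncrement h x v := by
    rw [intervalIntegral.integral_comp_add_left (fun v => truncIncrement h x v)]
    exact intervalIntegral.integral_mono_interval (by linarith [hu.1]) (by linarith)
      (by linarith [hu.2]) (ae_of_all _ fun v => truncIncrement_nonneg h x v)
      (intervalIntegrable_truncIncrement hm _ _ _)
  have h0 := hX (x + u) (by linarith [hu.1])
  have hlt : min 1 |h (x + u) - h x| < min 1 δ := by
    change truncIncrement h x u < _
    linarith
  rcases min_lt_iff.1 hlt with h1 | h1
  · exact absurd (h1.trans_le (min_le_left _ _)) (lt_irrefl _)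
  · exact h1.trans_le (min_le_right _ _)

/-- Uniform convergence theorem for slowly varying functions. -/
theorem SlowlyVaryingAtTop.eventually_abs_sub_le {ℓ : ℝ → ℝ} (hℓ : SlowlyVaryingAtTop ℓ)
    {b : ℝ} (hb : 0 < b) (B : ℝ) {ε : ℝ} (hε : 0 < ε) :
    ∀ᶠ s in atTop, ∀ c ∈ Icc b B, |ℓ (c * s) - ℓ s| ≤ ε * ℓ s := by
  set h : ℝ → ℝ := fun x => Real.log (ℓ (Real.exp x)) with hh
  have hm : AEMeasurable h := by
    have := hℓ.aemeasurable.comp_of_differentiableOn_leftInverse (S := univ) Real.measurable_exp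
      (fun x _ => Real.exp_pos x)
      (fun x hx => (Real.differentiableAt_log (ne_of_gt hx)).differentiableWithinAt)
      (fun x _ => Real.log_exp x)
    rw [Measure.restrict_univ] at this
    exact Real.measurable_log.comp_aemeasurable this
  have hlim : ∀ v, Tendsto (fun x => h (x + v) - h x) atTop (𝓝 0) := by
    intro v
    have h1 := ((hℓ.tendsto _ (Real.exp_pos v)).comp Real.tendsto_exp_atTop).log one_ne_zero
    rw [Real.log_one] at h1
    refine h1.congr fun x => ?_
    simp only [Function.comp, hh]
    rw [Real.log_div (hℓ.pos _ (by positivity)).ne' (hℓ.pos _ (by positivity)).ne', Real.exp_add,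
      mul_comm]
  obtain ⟨δ, hδ, hexp⟩ := Metric.continuousAt_iff.1 (Real.continuous_exp.continuousAt (x := 0)) ε hε
  filter_upwards [Real.tendsto_log_atTop.eventually
    (eventually_abs_increment_lt hm hlim (Real.log b) (Real.log B) hδ),
    eventually_gt_atTop 0] with s hs hs0 c hc
  have hc0 : 0 < c := hb.trans_le hc.1
  have h1 := hs (Real.log c) ⟨Real.log_le_log hb hc.1, Real.log_le_log hc0 hc.2⟩
  have h2 := hexp (x := h (Real.log s + Real.log c) - h (Real.log s))
    (by simpa [Real.dist_eq] using h1)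
  have hs' := hℓ.pos s hs0
  have hcs' := hℓ.pos (c * s) (by positivity)
  simp only [hh, Real.exp_add, Real.exp_log hs0, Real.exp_log hc0, Real.exp_sub, mul_comm s c,
    Real.exp_log hs', Real.exp_log hcs', Real.dist_eq, Real.exp_zero] at h2
  have h3 : ℓ (c * s) - ℓ s = (ℓ (c * s) / ℓ s - 1) * ℓ s := by field_simp
  rw [h3, abs_mul, abs_of_pos hs']
  exact mul_le_mul_of_nonneg_right h2.le hs'.le

/-- If `ℓ` is measurable and locally bounded, then `y ↦ w y * ℓ (t / y)` is integrable on compact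
subintervals of `(0,∞)` for continuous weights `w`. -/
theorem intervalIntegrable_mul_comp_div {ℓ w : ℝ → ℝ}
    (hm : AEMeasurable ℓ (volume.restrict (Ioi 0))) (hb : LocallyBoundedOnIoi ℓ)
    {t u v : ℝ} (ht : 0 < t) (hu : 0 < u) (huv : u ≤ v) (hw : ContinuousOn w (Icc u v)) :
    IntervalIntegrable (fun y => w y * ℓ (t / y)) volume u v := by
  obtain ⟨M, hM⟩ := hb (t / v) (t / u) (div_pos ht (hu.trans_le huv))
  have hmeas : AEMeasurable (fun y => ℓ (t / y)) (volume.restrict (uIoc u v)) := by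
    refine hm.comp_of_differentiableOn_leftInverse (g := fun z => t / z)
      (measurable_const.div measurable_id) ?_ ?_ ?_
    · intro y hy
      rw [uIoc_of_le huv] at hy
      exact div_pos ht (hu.trans hy.1)
    · intro z hz
      exact ((differentiableAt_const t).div differentiableAt_id
        (ne_of_gt hz)).differentiableWithinAt
    · intro y hy
      exact div_div_cancel₀ ht.ne'
  have hℓint : IntervalIntegrable (fun y => ℓ (t / y)) volume u v := by
    refine (intervalIntegrable_const (c := M)).mono_fun hmeas.aestronglyMeasurable ?_
    refine (ae_restrict_iff' measurableSet_uIoc).2 (ae_of_all _ fun y hy => ?_)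
    rw [uIoc_of_le huv] at hy
    have hy0 : 0 < y := hu.trans hy.1
    exact (hM (t / y) ⟨div_le_div_of_nonneg_left ht.le hy0 hy.2,
      div_le_div_of_nonneg_left ht.le hu hy.1.le⟩).trans (le_abs_self M)
  exact hℓint.continuousOn_mul (by rwa [uIcc_of_le huv])

theorem stmt_11 (ℓ : ℝ → ℝ) (hℓ : SlowlyVaryingAtTop ℓ) (hℓb : LocallyBoundedOnIoi ℓ)
    (q : ℝ → ℝ) (hq : ClassQ q) (a A : ℝ) (ha : 0 < a) (ha1 : a < 1) (hA : 1 < A) :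
    Tendsto (fun t : ℝ =>
      (∫ y in (a * q t)..(A * q t), y ^ (q t - 1) * Real.exp (-y) * ℓ (t / y)) /
        (ℓ (t / q t) * ∫ y in (a * q t)..(A * q t), y ^ (q t - 1) * Real.exp (-y)))
      atTop (𝓝 1) := by
  have hA0 : 0 < A := one_pos.trans hA
  have hdiv : Tendsto (fun t => t / q t) atTop atTop := by
    have h0 : Tendsto (fun t => q t / t) atTop (𝓝[>] 0) :=
      tendsto_nhdsWithin_iff.2 ⟨hq.tendsto_div, by
        filter_upwards [hq.eventually_pos, eventually_gt_atTop 0] with t h1 h2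
        exact div_pos h1 h2⟩
    exact h0.inv_tendsto_nhdsGT_zero.congr fun t => inv_div _ _
  rw [Metric.tendsto_nhds]
  intro ε hε
  filter_upwards [hdiv.eventually
    (hℓ.eventually_abs_sub_le (b := 1 / A) (by positivity) (1 / a) (half_pos hε)),
    hq.eventually_pos, eventually_gt_atTop 0] with t hunif hqt ht
  have hu : 0 < a * q t := mul_pos ha hqt
  have huv : a * q t < A * q t := mul_lt_mul_of_pos_right (ha1.trans hA) hqt
  set w : ℝ → ℝ := fun y => y ^ (q t - 1) * Real.exp (-y) with hw
  have hwpos : ∀ y, 0 < y → 0 < w y := fun y hy => by positivity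
  have hwcont : ContinuousOn w (Icc (a * q t) (A * q t)) := by
    refine ContinuousOn.mul (fun y hy => ?_) (Real.continuous_exp.comp continuous_neg).continuousOn
    exact (Real.continuousAt_rpow_const _ _ (Or.inl (hu.trans_le hy.1).ne')).continuousWithinAt
  have hwint : IntervalIntegrable w volume (a * q t) (A * q t) :=
    hwcont.intervalIntegrable_of_Icc huv.le
  have hI : 0 < ∫ y in (a * q t)..(A * q t), w y :=
    intervalIntegral.intervalIntegral_pos_of_pos_on hwint (fun y hy => hwpos y (hu.trans hy.1)) huv
  have hL : 0 < ℓ (t / q t) := hℓ.pos _ (div_pos ht hqt)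
  have hest : |(∫ y in (a * q t)..(A * q t), w y * ℓ (t / y)) -
      ℓ (t / q t) * ∫ y in (a * q t)..(A * q t), w y| ≤
      ε / 2 * (ℓ (t / q t) * ∫ y in (a * q t)..(A * q t), w y) := by
    rw [← mul_assoc, ← intervalIntegral.integral_const_mul, ← intervalIntegral.integral_const_mul,
      ← intervalIntegral.integral_sub
        (intervalIntegrable_mul_comp_div hℓ.aemeasurable hℓb ht hu huv.le hwcont)
        (hwint.const_mul _), ← Real.norm_eq_abs]
    refine intervalIntegral.norm_integral_le_of_norm_le huv.le
      (ae_of_all _ fun y hy => ?_) (hwint.const_mul _)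
    have hy0 : 0 < y := hu.trans hy.1
    have h1 := hunif (q t / y) ⟨by
      rw [div_le_div_iff₀ hA0 hy0]; linarith [hy.2], by
      rw [div_le_div_iff₀ hy0 ha]; linarith [hy.1]⟩
    have h2 : q t / y * (t / q t) = t / y := by field_simp
    rw [h2] at h1
    rw [Real.norm_eq_abs, mul_comm (ℓ (t / q t)) (w y), ← mul_sub, abs_mul,
      abs_of_pos (hwpos y hy0), mul_comm (w y)]
    exact mul_le_mul_of_nonneg_right h1 (hwpos y hy0).le
  have hD := mul_pos hL hI
  rw [Real.dist_eq, div_sub_one hD.ne', abs_div, abs_of_pos hD, div_lt_iff₀ hD]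
  exact hest.trans_lt (mul_lt_mul_of_pos_right (half_lt_self hε) hD)
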